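/- Let T be the tree of all subsets of ℚ that are well ordered by the usual order of the real line, ordered by end-extension (t ≤ s iff t is an initial segment of s, i.e., t ⊆ s and every element of s∖t is greater than every element of t). Let L ⊆ 2^T be the tree space of T. Then L is a Boolean image of a path-connected compact Hausdorff space, but L is not a Boolean image of any convex compact subset of [0,1]^Γ, for any set Γ. -/

import Mathlib

open Set

/-- `φ` is an isomorphism of the family `𝒢` of subsets of `X` with a family of
pseudoclopens of the topological space `K`: `φ` is injective on `𝒢`, each `φ a`
is a pseudoclopen (a pair of a closed set contained in an open set), and for all
finite disjoint `F, H ⊆ 𝒢` (i.e. pairwise distinct `a₁,…,aₙ,b₁,…,bₘ ∈ 𝒢`) the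
two implications between vanishing of `⋂ F \ ⋃ H` and of the corresponding
combinations of the pseudoclopens hold. -/
def IsPseudoclopenIso {X K : Type*} [TopologicalSpace K]
    (𝒢 : Set (Set X)) (φ : Set X → Set K × Set K) : Prop :=
  Set.InjOn φ 𝒢 ∧
  (∀ a ∈ 𝒢, IsClosed (φ a).1 ∧ IsOpen (φ a).2 ∧ (φ a).1 ⊆ (φ a).2) ∧
  ∀ F H : Set (Set X), F.Finite → H.Finite → F ⊆ 𝒢 → H ⊆ 𝒢 → Disjoint F H →
    ((⋂₀ F \ ⋃₀ H = ∅ → (⋂ a ∈ F, (φ a).2) \ (⋃ a ∈ H, (φ a).1) = ∅) ∧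
     ((⋂ a ∈ F, (φ a).1) \ (⋃ a ∈ H, (φ a).2) = ∅ → ⋂₀ F \ ⋃₀ H = ∅))

/-- A family of subsets of `L` separates the points of `L`. -/
def SeparatesPoints' {L : Type*} (𝒢 : Set (Set L)) : Prop :=
  ∀ x y : L, x ≠ y → ∃ a ∈ 𝒢, (x ∈ a ∧ y ∉ a) ∨ (y ∈ a ∧ x ∉ a)

/-- `L` is a Boolean image of `K`: there is a point-separating family of clopen
subsets of `L` which is isomorphic to a family of pseudoclopens of `K`. -/
def IsBooleanImage (L K : Type*) [TopologicalSpace L] [TopologicalSpace K] : Prop :=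
  ∃ (𝒢 : Set (Set L)) (φ : Set L → Set K × Set K),
    (∀ a ∈ 𝒢, IsClopen a) ∧ SeparatesPoints' 𝒢 ∧ IsPseudoclopenIso 𝒢 φ

/-- The tree space of `T`: the characteristic functions (into `Bool`) of the
downward closed chains of `T`, as a subset of the Cantor cube `2^T`. -/
def TreeSpace (T : Type*) [PartialOrder T] : Set (T → Bool) :=
  {x | IsChain (· ≤ ·) {t | x t = true} ∧ ∀ s t : T, s ≤ t → x t = true → x s = true}

/-- The tree of all subsets of `ℚ` that are well ordered by the usual order. -/
def WOQ : Type := {t : Set ℚ // t.IsWF}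

/-- The end-extension partial order on `WOQ`: `t ≤ s` iff `t ⊆ s` and every
element of `s \ t` is greater than every element of `t`. -/
instance : PartialOrder WOQ where
  le t s := t.1 ⊆ s.1 ∧ ∀ a ∈ s.1, a ∉ t.1 → ∀ b ∈ t.1, b < a
  le_refl t := ⟨subset_rfl, fun a ha hna _ _ => absurd ha hna⟩
  le_trans := by
    rintro t s r ⟨hts, hts'⟩ ⟨hsr, hsr'⟩
    refine ⟨hts.trans hsr, fun a har hat b hbt => ?_⟩
    by_cases has : a ∈ s.1
    · exact hts' a has hat b hbt
    · exact hsr' a har has b (hts hbt)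
  le_antisymm := by
    rintro t s ⟨hts, _⟩ ⟨hst, _⟩
    exact Subtype.ext (subset_antisymm hts hst)

/-!
A path-connected space with `TreeSpace WOQ` as a Boolean image is obtained by letting the
coordinates of a chain take values in `[0, 1]`. Such a function is joined to `0` by scaling its
coordinates one after the other, each node `t` during an interval of times that starts at a
strictly increasing weight of the set `t ⊆ ℚ`.

Now let `φ` be an isomorphism of a separating family `𝒢` with pseudoclopens of a compact convex
set `K`. For a nonempty node `t`, some `a ∈ 𝒢`, up to complementation, contains the chain of all
`s ≤ t` but not that of all `s < t`. By compactness there is `q ∈ t` such that every chain in `a`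
that reaches `t ∩ (-∞, q]` passes through `t`, and there is `n` such that moving a point of
`(φ a)⁻` inside `K` by `1/(n+1)` times a difference of points of `K` does not leave `(φ a)⁺`. A
Baire category argument gives one pair `(n, q)` that serves a cofinal set of nodes.

Hence there are infinitely many pairwise incomparable nodes of this kind, each at the bottom of a
strictly increasing sequence `t 0 < ⋯ < t (n + 1)` of such nodes with nested sets
`a 0 ⊇ ⋯ ⊇ a (n + 1)`. Choose a point in each `(φ (a (n + 1)))⁻`. Two of these points, `x` and
`y`, are close. Walking from `x` to `y` in `n + 1` steps of length `1/(n+1)`, one leaves at most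
one of the nested pseudoclopens of `x` at each step, so `y ∈ (φ (a 0))⁻`. But the sets `a 0` that
belong to `x` and `y` are disjoint, and so are their pseudoclopens.
-/

open Filter Topology

/-- A partial order in which, as in a tree, any two elements with a common upper bound are
comparable. Neither a root nor well-foundedness is part of the notion. -/
class IsForestOrder (T : Type*) [PartialOrder T] : Prop where
  le_or_ge_of_le {s t u : T} (hs : s ≤ u) (ht : t ≤ u) : s ≤ t ∨ t ≤ s

/-! ### Tree spaces -/

namespace TreeSpace

variable {T : Type*} [PartialOrder T]

/-- The basic clopen set of the tree space formed by the chains passing through `t`. -/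
def cone (t : T) : Set (TreeSpace T) := {x | x.1 t = true}

lemma le_or_ge_of_mem_cone {x : TreeSpace T} {s t : T} (hs : x ∈ cone s) (ht : x ∈ cone t) :
    s ≤ t ∨ t ≤ s :=
  x.2.1.total hs ht

lemma cone_antitone : Antitone (cone : T → Set (TreeSpace T)) :=
  fun s t hst x hx => x.2.2 s t hst hx

lemma isClopen_cone (t : T) : IsClopen (cone t) :=
  (isClopen_discrete {true}).preimage ((continuous_apply t).comp continuous_subtype_val)

lemma exists_not_mem_cone_iff {x y : TreeSpace T} (hxy : x ≠ y) :
    ∃ t, ¬(x ∈ cone t ↔ y ∈ cone t) := by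
  contrapose! hxy
  exact Subtype.ext (funext fun t => Bool.eq_iff_iff.mpr (hxy t))

open Classical in
/-- A downward closed chain, as a point of the tree space. -/
noncomputable def ofChain (A : Set T) (hA : IsChain (· ≤ ·) A) (hA' : IsLowerSet A) :
    TreeSpace T :=
  ⟨fun t => decide (t ∈ A), by simpa [TreeSpace, IsLowerSet] using ⟨hA, fun s t h ht => hA' h ht⟩⟩

@[simp]
lemma ofChain_mem_cone {A : Set T} {hA : IsChain (· ≤ ·) A} {hA' : IsLowerSet A} {t : T} :
    ofChain A hA hA' ∈ cone t ↔ t ∈ A := by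
  simp [cone, ofChain]

instance : CompactSpace (TreeSpace T) := by
  have isClosed_of_apply (s t : T) (R : Bool → Bool → Prop) :
      IsClosed ((fun x : T → Bool => (x s, x t)) ⁻¹' {p | R p.1 p.2}) :=
    (isClosed_discrete _).preimage (by fun_prop)
  have eq_iInter : TreeSpace T = ⋂ s : T, ⋂ t : T, {x | (x s = true → x t = true → s ≠ t →
      s ≤ t ∨ t ≤ s) ∧ (s ≤ t → x t = true → x s = true)} := by
    ext x
    simp only [TreeSpace, IsChain, Set.Pairwise, mem_iInter, mem_ofPred_eq, forall_and]
    exact and_congr_left' ⟨fun h s t hs ht => h hs ht, fun h s hs t ht => h s t hs ht⟩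
  refine isCompact_iff_compactSpace.mp (IsClosed.isCompact ?_)
  rw [eq_iInter]
  exact isClosed_iInter fun s => isClosed_iInter fun t => isClosed_of_apply s t fun a b =>
    (a = true → b = true → s ≠ t → s ≤ t ∨ t ≤ s) ∧ (s ≤ t → b = true → a = true)

section Forest

variable [IsForestOrder T]

lemma isChain_Iic (t : T) : IsChain (· ≤ ·) (Iic t) :=
  fun _ hs _ hs' _ => IsForestOrder.le_or_ge_of_le hs hs'

/-- The chain of all elements `≤ t`. -/
noncomputable def principal (t : T) : TreeSpace T :=
  ofChain (Iic t) (isChain_Iic t) (isLowerSet_Iic t)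

/-- The chain of all elements `< t`. -/
noncomputable def strictPrincipal (t : T) : TreeSpace T :=
  ofChain (Iio t) ((isChain_Iic t).mono Iio_subset_Iic_self) (isLowerSet_Iio t)

@[simp]
lemma principal_mem_cone {s t : T} : principal t ∈ cone s ↔ s ≤ t := ofChain_mem_cone

@[simp]
lemma strictPrincipal_mem_cone {s t : T} : strictPrincipal t ∈ cone s ↔ s < t := ofChain_mem_cone

lemma principal_ne_strictPrincipal (t : T) : principal t ≠ strictPrincipal t := fun h =>
  lt_irrefl t (strictPrincipal_mem_cone.mp (h ▸ principal_mem_cone.mpr le_rfl))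

lemma cone_injective : Function.Injective (cone : T → Set (TreeSpace T)) := fun _ _ h =>
  le_antisymm (principal_mem_cone.mp (h ▸ principal_mem_cone.mpr le_rfl))
    (principal_mem_cone.mp (h.symm ▸ principal_mem_cone.mpr le_rfl))

end Forest

end TreeSpace

/-! ### Boolean images -/

lemma IsBooleanImage.of_indexed {ι L K : Type*} [TopologicalSpace L] [TopologicalSpace K]
    (c : ι → Set L) (P : ι → Set K × Set K) (hc : ∀ i, IsClopen (c i))
    (hc_inj : Function.Injective c) (hP_inj : Function.Injective P)
    (hc_sep : ∀ x y, x ≠ y → ∃ i, ¬(x ∈ c i ↔ y ∈ c i))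
    (hP : ∀ i, IsClosed (P i).1 ∧ IsOpen (P i).2 ∧ (P i).1 ⊆ (P i).2)
    (outer : ∀ F H : Set ι, Disjoint F H → ((⋂ i ∈ F, (P i).2) \ ⋃ i ∈ H, (P i).1).Nonempty →
      ((⋂ i ∈ F, c i) \ ⋃ i ∈ H, c i).Nonempty)
    (inner : ∀ F H : Set ι, ((⋂ i ∈ F, c i) \ ⋃ i ∈ H, c i).Nonempty →
      ((⋂ i ∈ F, (P i).1) \ ⋃ i ∈ H, (P i).2).Nonempty) :
    IsBooleanImage L K := by
  have extend_apply := hc_inj.extend_apply P fun _ => (∅, ∅)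
  refine ⟨range c, Function.extend c P fun _ => (∅, ∅), forall_mem_range.mpr hc, ?_, ?_, ?_, ?_⟩
  · intro x y hxy
    obtain ⟨i, hi⟩ := hc_sep x y hxy
    exact ⟨c i, mem_range_self i, by tauto⟩
  · rintro _ ⟨i, rfl⟩ _ ⟨j, rfl⟩ hij
    rw [extend_apply, extend_apply] at hij
    rw [hP_inj hij]
  · rintro _ ⟨i, rfl⟩
    simpa only [extend_apply] using hP i
  · rintro F H - - hF hH hFH
    obtain ⟨F, rfl⟩ := subset_range_iff_exists_image_eq.mp hF
    obtain ⟨H, rfl⟩ := subset_range_iff_exists_image_eq.mp hH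
    simp only [sInter_image, sUnion_image, biInter_image, biUnion_image, extend_apply,
      ← not_nonempty_iff_eq_empty, not_imp_not]
    exact ⟨outer F H ((disjoint_image_iff hc_inj).mp hFH), inner F H⟩

/-! ### Connected tree spaces -/

/-- The path-connected analogue of the tree space: the functions `T → [0,1]` supported on a chain
and such that `f s = 1` whenever `s` lies strictly below the support. -/
def ConnectedTreeSpace (T : Type*) [PartialOrder T] : Set (T → unitInterval) :=
  {f | (∀ s t, s < t → f t = 0 ∨ f s = 1) ∧ ∀ s t, ¬s ≤ t → ¬t ≤ s → f s = 0 ∨ f t = 0}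

namespace ConnectedTreeSpace

variable {T : Type*} [PartialOrder T]

lemma isChain_support (f : ConnectedTreeSpace T) : IsChain (· ≤ ·) {t | f.1 t ≠ 0} := by
  intro s hs t ht _
  by_contra! h
  exact (f.2.2 s t h.1 h.2).elim hs ht

instance : CompactSpace (ConnectedTreeSpace T) := by
  have isClosed_or (s t : T) (a b : unitInterval) :
      IsClosed {f : T → unitInterval | f s = a ∨ f t = b} :=
    (isClosed_eq (continuous_apply s) continuous_const).union
      (isClosed_eq (continuous_apply t) continuous_const)
  refine isCompact_iff_compactSpace.mp (IsClosed.isCompact ?_)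
  simp only [ConnectedTreeSpace, ofPred_and, ofPred_forall]
  exact (isClosed_iInter fun s => isClosed_iInter fun t => isClosed_iInter fun _ =>
    isClosed_or t s 0 1).inter (isClosed_iInter fun s => isClosed_iInter fun t =>
    isClosed_iInter fun _ => isClosed_iInter fun _ => isClosed_or s t 0 0)

lemma zero_mem : (fun _ => 0) ∈ ConnectedTreeSpace T :=
  ⟨fun _ _ _ => Or.inl rfl, fun _ _ _ _ => Or.inl rfl⟩

lemma inf_mem (f : ConnectedTreeSpace T) {g : T → unitInterval}
    (hg : ∀ s t, s < t → f.1 s ≠ 0 → f.1 t ≠ 0 → g t = 0 ∨ g s = 1) :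
    f.1 ⊓ g ∈ ConnectedTreeSpace T := by
  have inf_eq_zero {t : T} (ht : f.1 t = 0) : (f.1 ⊓ g) t = 0 := by
    simp only [Pi.inf_apply, ht, inf_eq_left]
    exact unitInterval.nonneg'
  refine ⟨fun s t hst => ?_, fun s t hst hts => (f.2.2 s t hst hts).imp inf_eq_zero inf_eq_zero⟩
  by_cases ht : f.1 t = 0
  · exact Or.inl (inf_eq_zero ht)
  have hs : f.1 s = 1 := (f.2.1 s t hst).resolve_left ht
  refine (hg s t hst (by simp [hs]) ht).imp (fun h => ?_) fun h => by simp [hs, h]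
  simp only [Pi.inf_apply, h, inf_eq_right]
  exact unitInterval.nonneg'

/- The path runs through `f ⊓ ramp r`, where `ramp r s` rises from `0` to `1` as `r` grows from
`w s` to `w s + δ s`: by the gap hypothesis these rises take place one after the other along the
support of `f`. -/
lemma joined_zero (w : T → ℝ) {M : ℝ} (hw : ∀ t, w t ∈ Icc 0 M) (f : ConnectedTreeSpace T)
    (hgap : ∀ s, ∃ δ > 0, ∀ t, f.1 t ≠ 0 → s < t → f.1 s ≠ 0 → w s + δ ≤ w t) :
    Joined ⟨_, zero_mem⟩ f := by
  choose δ hδ_pos hδ using hgap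
  let ramp (r : ℝ) (s : T) : unitInterval :=
    projIcc 0 1 zero_le_one ((r - w s) / min (δ s) 1)
  have hδ_pos' (s : T) : 0 < min (δ s) 1 := lt_min (hδ_pos s) one_pos
  have ramp_eq_zero {r : ℝ} {s : T} (h : r ≤ w s) : ramp r s = 0 :=
    projIcc_of_le_left _ (div_nonpos_of_nonpos_of_nonneg (sub_nonpos.mpr h) (hδ_pos' s).le)
  have ramp_eq_one {r : ℝ} {s : T} (h : w s + min (δ s) 1 ≤ r) : ramp r s = 1 :=
    projIcc_of_right_le _ ((one_le_div (hδ_pos' s)).mpr (by linarith))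
  have inf_ramp_mem (r : ℝ) : f.1 ⊓ ramp r ∈ ConnectedTreeSpace T := by
    refine inf_mem f fun s t hst hs ht => ?_
    refine (le_total r (w t)).imp ramp_eq_zero fun h => ramp_eq_one ?_
    linarith [hδ s t ht hst hs, min_le_left (δ s) 1]
  have continuous_path : Continuous fun r => (⟨f.1 ⊓ ramp r, inf_ramp_mem r⟩ :
      ConnectedTreeSpace T) := by
    refine Continuous.subtype_mk (continuous_pi fun s => ?_) _
    exact continuous_const.min (continuous_projIcc.comp (by fun_prop))
  convert (PathConnectedSpace.joined (0 : ℝ) (M + 1)).map continuous_path using 1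
  · refine Subtype.ext (funext fun s => ?_)
    simp only [Pi.inf_apply, ramp_eq_zero (hw s).1]
    exact (inf_eq_right.mpr unitInterval.nonneg').symm
  · refine Subtype.ext (funext fun s => ?_)
    simp only [Pi.inf_apply,
      ramp_eq_one (add_le_add (hw s).2 (min_le_right (δ s) 1))]
    exact (inf_eq_left.mpr unitInterval.le_one').symm

lemma pathConnectedSpace (w : T → ℝ) {M : ℝ} (hw : ∀ t, w t ∈ Icc 0 M)
    (hgap : ∀ S : Set T, IsChain (· ≤ ·) S → ∀ s ∈ S, ∃ δ > 0, ∀ t ∈ S, s < t → w s + δ ≤ w t) :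
    PathConnectedSpace (ConnectedTreeSpace T) := by
  have joined (f : ConnectedTreeSpace T) : Joined ⟨_, zero_mem⟩ f := by
    refine joined_zero w hw f fun s => ?_
    by_cases hs : f.1 s = 0
    · exact ⟨1, one_pos, fun _ _ _ h => absurd hs h⟩
    · obtain ⟨δ, hδ_pos, hδ⟩ := hgap _ (isChain_support f) s hs
      exact ⟨δ, hδ_pos, fun t ht hst _ => hδ t ht hst⟩
  exact ⟨⟨_, zero_mem⟩, fun f g => (joined f).symm.trans (joined g)⟩

open Classical in
/-- The inclusion of the tree space into its path-connected analogue. -/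
noncomputable def ofTreeSpace (x : TreeSpace T) : ConnectedTreeSpace T :=
  ⟨fun t => if x ∈ TreeSpace.cone t then 1 else 0, by
    refine ⟨fun s t hst => ?_, fun s t hst hts => ?_⟩
    · by_cases ht : x ∈ TreeSpace.cone t
      · simp [TreeSpace.cone_antitone hst.le ht]
      · simp [ht]
    · by_cases hs : x ∈ TreeSpace.cone s
      · have ht : x ∉ TreeSpace.cone t := fun ht =>
          (TreeSpace.le_or_ge_of_mem_cone hs ht).elim hst hts
        simp [ht]
      · simp [hs]⟩

lemma ofTreeSpace_eq_one {x : TreeSpace T} {t : T} :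
    (ofTreeSpace x).1 t = 1 ↔ x ∈ TreeSpace.cone t := by
  simp [ofTreeSpace]

lemma ofTreeSpace_eq_zero {x : TreeSpace T} {t : T} :
    (ofTreeSpace x).1 t = 0 ↔ x ∉ TreeSpace.cone t := by
  simp [ofTreeSpace]

/-- The pseudoclopen `({f | f t = 1}, {f | f t ≠ 0})`, which plays the role of the cone of `t`. -/
def pseudoCone (t : T) : Set (ConnectedTreeSpace T) × Set (ConnectedTreeSpace T) :=
  ({f | f.1 t = 1}, {f | f.1 t ≠ 0})

lemma isPseudoclopen_pseudoCone (t : T) : IsClosed (pseudoCone t).1 ∧ IsOpen (pseudoCone t).2 ∧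
    (pseudoCone t).1 ⊆ (pseudoCone t).2 := by
  have continuous_eval : Continuous fun f : ConnectedTreeSpace T => f.1 t :=
    (continuous_apply t).comp continuous_subtype_val
  refine ⟨isClosed_eq continuous_eval continuous_const, isOpen_ne_fun continuous_eval
    continuous_const, fun f (hf : f.1 t = 1) => ?_⟩
  simp [pseudoCone, hf]

variable [IsForestOrder T]

lemma pseudoCone_injective :
    Function.Injective (pseudoCone : T → Set (ConnectedTreeSpace T) × Set _) := by
  have mem_iff {s t : T} : ofTreeSpace (TreeSpace.principal t) ∈ (pseudoCone s).1 ↔ s ≤ t :=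
    ofTreeSpace_eq_one.trans TreeSpace.principal_mem_cone
  exact fun s t h => le_antisymm (mem_iff.mp (h ▸ mem_iff.mpr le_rfl))
    (mem_iff.mp (h.symm ▸ mem_iff.mpr le_rfl))

lemma exists_treeSpace_of_mem_pseudoCones (f : ConnectedTreeSpace T) {F H : Set T}
    (hFH : Disjoint F H) (hF : ∀ t ∈ F, f ∈ (pseudoCone t).2)
    (hH : ∀ t ∈ H, f ∉ (pseudoCone t).1) :
    ∃ x : TreeSpace T, (∀ t ∈ F, x ∈ TreeSpace.cone t) ∧ ∀ t ∈ H, x ∉ TreeSpace.cone t := by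
  have isChain_lowerClosure : IsChain (· ≤ ·) (lowerClosure F : Set T) := by
    rintro s ⟨t, ht, hst⟩ s' ⟨t', ht', hst'⟩ -
    rcases (isChain_support f).total (hF t ht) (hF t' ht') with h | h
    · exact IsForestOrder.le_or_ge_of_le (hst.trans h) hst'
    · exact IsForestOrder.le_or_ge_of_le hst (hst'.trans h)
  refine ⟨TreeSpace.ofChain (lowerClosure F) isChain_lowerClosure (lowerClosure F).lower,
    fun t ht => ?_, fun s hs => ?_⟩
  · exact TreeSpace.ofChain_mem_cone.mpr (subset_lowerClosure ht)
  · rw [TreeSpace.ofChain_mem_cone]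
    rintro ⟨t, ht, hst⟩
    rcases hst.lt_or_eq with hst | rfl
    · exact (f.2.1 s t hst).elim (hF t ht) (hH s hs)
    · exact disjoint_left.mp hFH ht hs

theorem isBooleanImage : IsBooleanImage (TreeSpace T) (ConnectedTreeSpace T) := by
  refine .of_indexed TreeSpace.cone pseudoCone TreeSpace.isClopen_cone TreeSpace.cone_injective
    pseudoCone_injective (fun _ _ => TreeSpace.exists_not_mem_cone_iff)
    isPseudoclopen_pseudoCone ?_ ?_
  · rintro F H hFH ⟨f, hfF, hfH⟩
    obtain ⟨x, hxF, hxH⟩ := exists_treeSpace_of_mem_pseudoCones f hFH (by simpa using hfF)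
      (by simpa using hfH)
    exact ⟨x, by simpa using hxF, by simpa using hxH⟩
  · rintro F H ⟨x, hxF, hxH⟩
    refine ⟨ofTreeSpace x, ?_, ?_⟩
    · simpa [pseudoCone, ofTreeSpace_eq_one] using hxF
    · simpa [pseudoCone, ofTreeSpace_eq_zero] using hxH

end ConnectedTreeSpace

/-! ### Compact convex sets -/

section Convexity

variable {E : Type*} [AddCommGroup E] [Module ℝ E] {K : Set E}

/-- A pair `P` of subsets of `K` has margin `n` if one stays in `P.2` when moving away from a point
of `P.1` inside `K` by at most `1/(n+1)` times a difference of two points of `K`. -/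
def HasMargin (n : ℕ) (P : Set K × Set K) : Prop :=
  ∀ x ∈ P.1, ∀ y z z' : K, (y : E) = x + (1 / ((n : ℝ) + 1)) • ((z : E) - z') → y ∈ P.2

lemma HasMargin.mem_of_segment_subset (hK : Convex ℝ K) {n : ℕ} {P : ℕ → Set K × Set K}
    {U : Set K} (hP : ∀ j, HasMargin n (P j)) (hnest : ∀ j, (P (j + 1)).2 ∩ U ⊆ (P j).1)
    {x y : K} (hx : x ∈ (P (n + 1)).1) (hxy : Subtype.val ⁻¹' segment ℝ (x : E) y ⊆ U) :
    y ∈ (P 0).1 := by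
  have walk (k j : ℕ) (hkj : k + j = n + 1) (z : K)
      (hz : (z : E) = AffineMap.lineMap (x : E) y (k / (n + 1) : ℝ)) : z ∈ (P j).1 := by
    induction k generalizing j z with
    | zero =>
      obtain rfl : j = n + 1 := by omega
      obtain rfl : z = x := Subtype.ext (by simpa using hz)
      exact hx
    | succ k ih =>
      have div_mem (l : ℕ) (hl : l ≤ n + 1) : (l / (n + 1) : ℝ) ∈ Icc (0 : ℝ) 1 :=
        ⟨by positivity, div_le_one_of_le₀ (by exact_mod_cast hl) (by positivity)⟩
      have previous := ih (j + 1) (by omega)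
        ⟨_, hK.lineMap_mem x.2 y.2 (div_mem k (by omega))⟩ rfl
      refine hnest j ⟨hP (j + 1) _ previous z y x ?_, hxy ?_⟩
      · rw [hz]
        simp only [AffineMap.lineMap_apply_module']
        push_cast
        module
      · rw [mem_preimage, segment_eq_image_lineMap, hz]
        exact mem_image_of_mem _ (by exact_mod_cast div_mem (k + 1) (by omega))
  exact walk (n + 1) 0 rfl y (by simp [div_self (n.cast_add_one_ne_zero (R := ℝ))])

variable [TopologicalSpace E] [IsTopologicalAddGroup E] [ContinuousSMul ℝ E]

lemma exists_hasMargin (hK : IsCompact K) {P : Set K × Set K} (hP_closed : IsClosed P.1)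
    (hP_open : IsOpen P.2) (hP : P.1 ⊆ P.2) : ∃ n, HasMargin n P := by
  have : CompactSpace K := isCompact_iff_compactSpace.mp hK
  obtain ⟨O, hO, hOP⟩ := isOpen_induced_iff.mp hP_open
  have eventually_mem : ∀ᶠ r : ℝ in 𝓝 0, ∀ p ∈ P.1 ×ˢ (univ : Set (K × K)),
      (p.1 : E) + r • ((p.2.1 : E) - p.2.2) ∈ O := by
    refine (hP_closed.isCompact.prod isCompact_univ).eventually_forall_of_forall_eventually
      fun p hp => ?_
    refine ContinuousAt.eventually_mem (by fun_prop) (hO.mem_nhds ?_)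
    simpa using hOP.ge (hP hp.1)
  obtain ⟨n, hn⟩ := (tendsto_one_div_add_atTop_nhds_zero_nat.eventually eventually_mem).exists
  refine ⟨n, fun x hx y z z' hy => hOP.le ?_⟩
  rw [mem_preimage, hy]
  exact hn (x, z, z') ⟨hx, mem_univ _⟩

lemma exists_ne_segment_subset (hK : IsCompact K) {C U : Set K} (hC : IsClosed C)
    (hU : IsOpen U) (hCU : C ⊆ U) {x : ℕ → K} (hx : ∀ i, x i ∈ C) :
    ∃ i j, i ≠ j ∧ Subtype.val ⁻¹' segment ℝ (x i : E) (x j) ⊆ U := by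
  have : CompactSpace K := isCompact_iff_compactSpace.mp hK
  obtain ⟨O, hO, rfl⟩ := isOpen_induced_iff.mp hU
  obtain ⟨k, hkC, hk⟩ := hC.isCompact.exists_mapClusterPt (f := atTop) (u := x)
    (le_principal_iff.mpr (mem_map.mpr (univ_mem' hx)))
  have eventually_segment : ∀ᶠ p in 𝓝 (k, k), ∀ r ∈ Icc (0 : ℝ) 1,
      AffineMap.lineMap (p.1 : E) (p.2 : E) r ∈ O := by
    refine isCompact_Icc.eventually_forall_of_forall_eventually fun r _ => ?_
    refine ContinuousAt.eventually_mem ?_ (hO.mem_nhds (by simpa using hCU hkC))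
    simp only [AffineMap.lineMap_apply_module']
    fun_prop
  rw [nhds_prod_eq, Filter.Eventually, mem_prod_same_iff] at eventually_segment
  obtain ⟨V, hV, hVO⟩ := eventually_segment
  obtain ⟨i, hi, j, hj, hij⟩ :=
    (Nat.frequently_atTop_iff_infinite.mp (hk.frequently hV)).nontrivial
  refine ⟨i, j, hij, fun y hy => ?_⟩
  rw [mem_preimage, segment_eq_image_lineMap] at hy
  obtain ⟨r, hr, hry⟩ := hy
  rw [mem_preimage, ← hry]
  exact hVO (mk_mem_prod hi hj) r hr

lemma HasMargin.exists_ne_inter_nonempty (hK_convex : Convex ℝ K) (hK : IsCompact K) {C U : Set K}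
    (hC : IsClosed C) (hU : IsOpen U) (hCU : C ⊆ U) {n : ℕ} {P : ℕ → ℕ → Set K × Set K}
    (hP : ∀ i j, HasMargin n (P i j)) (hnest : ∀ i j, (P i (j + 1)).2 ∩ U ⊆ (P i j).1)
    (hne : ∀ i, (C ∩ (P i (n + 1)).1).Nonempty) :
    ∃ i j, i ≠ j ∧ (U ∩ (P i 0).1 ∩ (P j 0).1).Nonempty := by
  choose x hxC hxP using hne
  obtain ⟨i, j, hij, hseg⟩ := exists_ne_segment_subset hK hC hU hCU hxC
  have hseg_self : Subtype.val ⁻¹' segment ℝ (x j : E) (x j) ⊆ U := by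
    intro y hy
    obtain rfl : y = x j := Subtype.ext (by simpa using hy)
    exact hCU (hxC j)
  exact ⟨i, j, hij, x j,
    ⟨hCU (hxC j), mem_of_segment_subset hK_convex (hP i) (hnest i) (hxP i) hseg⟩,
    mem_of_segment_subset hK_convex (hP j) (hnest j) (hxP j) hseg_self⟩

end Convexity

/-! ### Cells of a family of clopen sets -/

lemma exists_finset_forall_mem_iff {X ι : Type*} [TopologicalSpace X] [CompactSpace X]
    {c : ι → Set X} (hc : ∀ i, IsClopen (c i)) (hsep : ∀ x y, x ≠ y → ∃ i, ¬(x ∈ c i ↔ y ∈ c i))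
    {O : Set X} (hO : IsOpen O) {x : X} (hx : x ∈ O) :
    ∃ I : Finset ι, ∀ y, (∀ i ∈ I, x ∈ c i ↔ y ∈ c i) → y ∈ O := by
  have isClosed_agree (i : ι) : IsClosed {y | x ∈ c i ↔ y ∈ c i} := by
    by_cases hi : x ∈ c i
    · simpa [hi] using (hc i).isClosed
    · simpa [hi, compl_def] using (hc i).compl.isClosed
  obtain ⟨I, hI⟩ := hO.isClosed_compl.isCompact.elim_finite_subfamily_closed _ isClosed_agree (by
    rw [← not_nonempty_iff_eq_empty]
    rintro ⟨y, hyO, hy⟩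
    obtain ⟨i, hi⟩ := hsep x y fun h => hyO (h ▸ hx)
    exact hi (mem_iInter.mp hy i))
  refine ⟨I, fun y hy => by_contra fun hyO => ?_⟩
  exact (hI.subset ⟨hyO, mem_iInter₂.mpr hy⟩ : y ∈ (∅ : Set X))

/-- The pairs `(F, H)` occurring in the definition of an isomorphism with a family of
pseudoclopens. -/
structure IsAdmissible {X : Type*} (𝒢 F H : Set (Set X)) : Prop where
  finite_left : F.Finite
  finite_right : H.Finite
  subset_left : F ⊆ 𝒢
  subset_right : H ⊆ 𝒢
  disjoint : Disjoint F H

namespace IsAdmissible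

variable {X : Type*} {𝒢 F H : Set (Set X)} {a : Set X}

lemma insert_left (h : IsAdmissible 𝒢 F H) (ha : a ∈ 𝒢) (haH : a ∉ H) :
    IsAdmissible 𝒢 (insert a F) H :=
  ⟨h.1.insert a, h.2, insert_subset ha h.3, h.4, disjoint_insert_left.mpr ⟨haH, h.5⟩⟩

lemma insert_right (h : IsAdmissible 𝒢 F H) (ha : a ∈ 𝒢) (haF : a ∉ F) :
    IsAdmissible 𝒢 F (insert a H) :=
  ⟨h.1, h.2.insert a, h.3, insert_subset ha h.4, disjoint_insert_right.mpr ⟨haF, h.5⟩⟩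

lemma isOpen_cell [TopologicalSpace X] (h : IsAdmissible 𝒢 F H) (h𝒢 : ∀ a ∈ 𝒢, IsClopen a) :
    IsOpen (⋂₀ F \ ⋃₀ H) :=
  (h.finite_left.isOpen_sInter fun a ha => (h𝒢 a (h.subset_left ha)).isOpen).sdiff
    (sUnion_eq_biUnion ▸ h.finite_right.isClosed_biUnion fun a ha =>
      (h𝒢 a (h.subset_right ha)).isClosed)

end IsAdmissible

lemma SeparatesPoints'.exists_cell_subset {X : Type*} [TopologicalSpace X] [CompactSpace X]
    {𝒢 : Set (Set X)} (hsep : SeparatesPoints' 𝒢) (h𝒢 : ∀ a ∈ 𝒢, IsClopen a) {O : Set X}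
    (hO : IsOpen O) {x : X} (hx : x ∈ O) :
    ∃ F H, IsAdmissible 𝒢 F H ∧ x ∈ ⋂₀ F \ ⋃₀ H ∧ ⋂₀ F \ ⋃₀ H ⊆ O := by
  obtain ⟨I, hI⟩ := exists_finset_forall_mem_iff (c := fun a : 𝒢 => (a : Set X))
    (fun a => h𝒢 a a.2) (fun x y hxy => by
      obtain ⟨a, ha, h⟩ := hsep x y hxy
      exact ⟨⟨a, ha⟩, by tauto⟩) hO hx
  let S : Set (Set X) := Subtype.val '' (I : Set 𝒢)
  have hS : S.Finite := I.finite_toSet.image _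
  have hS𝒢 : S ⊆ 𝒢 := image_subset_iff.mpr fun a _ => a.2
  refine ⟨{a ∈ S | x ∈ a}, {a ∈ S | x ∉ a}, ⟨hS.sep _, hS.sep _, (sep_subset _ _).trans hS𝒢,
    (sep_subset _ _).trans hS𝒢, disjoint_left.mpr fun a ha ha' => ha'.2 ha.2⟩, ?_, ?_⟩
  · exact ⟨fun a ha => ha.2, fun ⟨a, ha, hxa⟩ => ha.2 hxa⟩
  · refine fun y hy => hI y fun a ha => ⟨fun hxa => ?_, fun hya => ?_⟩
    · exact hy.1 a ⟨mem_image_of_mem _ ha, hxa⟩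
    · by_contra hxa
      exact hy.2 ⟨a, ⟨mem_image_of_mem _ ha, hxa⟩, hya⟩

/-! ### Pseudoclopens of cells -/

section Cells

variable {X K : Type*} (φ : Set X → Set K × Set K) (F H : Set (Set X))

/-- The lower approximation of the cell `⋂₀ F \ ⋃₀ H` by the pseudoclopens of the family `φ`. -/
def innerCell : Set K := (⋂ a ∈ F, (φ a).1) \ ⋃ a ∈ H, (φ a).2

/-- The upper approximation of the cell `⋂₀ F \ ⋃₀ H` by the pseudoclopens of the family `φ`. -/
def outerCell : Set K := (⋂ a ∈ F, (φ a).2) \ ⋃ a ∈ H, (φ a).1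

variable {φ F H} {a : Set X}

lemma innerCell_insert_left : innerCell φ (insert a F) H = innerCell φ F H ∩ (φ a).1 := by
  simp only [innerCell, biInter_insert, inter_comm (φ a).1, inter_sdiff_right_comm]

lemma outerCell_insert_left : outerCell φ (insert a F) H = outerCell φ F H ∩ (φ a).2 := by
  simp only [outerCell, biInter_insert, inter_comm (φ a).2, inter_sdiff_right_comm]

lemma outerCell_insert_right : outerCell φ F (insert a H) = outerCell φ F H \ (φ a).1 := by
  simp only [outerCell, biUnion_insert, union_comm (φ a).1, sdiff_sdiff]

end Cells

lemma biInter_compl_sdiff_biUnion_compl {X Y : Type*} (f g : Set X → Set Y) (F H : Set (Set X)) :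
    (⋂ a ∈ F, (f aᶜ)ᶜ) \ ⋃ a ∈ H, (g aᶜ)ᶜ =
      (⋂ a ∈ compl ⁻¹' H, g a) \ ⋃ a ∈ compl ⁻¹' F, f a := by
  ext y
  simp only [Set.mem_sdiff, mem_iInter₂, mem_iUnion₂, mem_compl_iff, mem_preimage, not_exists,
    not_not]
  rw [compl_surjective.forall (p := fun a => ∀ _ : a ∈ H, y ∈ g aᶜ),
    compl_surjective.forall (p := fun a => ∀ _ : a ∈ F, y ∉ f aᶜ)]
  simp only [compl_compl, and_comm]

namespace IsPseudoclopenIso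

variable {X K : Type*} [TopologicalSpace K] {𝒢 F H : Set (Set X)} {φ : Set X → Set K × Set K}
  {a b : Set X}

lemma isClosed_innerCell (h : IsPseudoclopenIso 𝒢 φ) (hFH : IsAdmissible 𝒢 F H) :
    IsClosed (innerCell φ F H) :=
  (isClosed_biInter fun a ha => (h.2.1 a (hFH.subset_left ha)).1).sdiff
    (isOpen_biUnion fun a ha => (h.2.1 a (hFH.subset_right ha)).2.1)

lemma isOpen_outerCell (h : IsPseudoclopenIso 𝒢 φ) (hFH : IsAdmissible 𝒢 F H) :
    IsOpen (outerCell φ F H) :=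
  (hFH.finite_left.isOpen_biInter fun a ha => (h.2.1 a (hFH.subset_left ha)).2.1).sdiff
    (hFH.finite_right.isClosed_biUnion fun a ha => (h.2.1 a (hFH.subset_right ha)).1)

lemma innerCell_subset_outerCell (h : IsPseudoclopenIso 𝒢 φ) (hFH : IsAdmissible 𝒢 F H) :
    innerCell φ F H ⊆ outerCell φ F H :=
  sdiff_subset_sdiff (iInter₂_mono fun a ha => (h.2.1 a (hFH.subset_left ha)).2.2)
    (iUnion₂_mono fun a ha => (h.2.1 a (hFH.subset_right ha)).2.2)

lemma outerCell_eq_empty (h : IsPseudoclopenIso 𝒢 φ) (hFH : IsAdmissible 𝒢 F H)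
    (hcell : ⋂₀ F \ ⋃₀ H = ∅) : outerCell φ F H = ∅ :=
  (h.2.2 F H hFH.1 hFH.2 hFH.3 hFH.4 hFH.5).1 hcell

lemma innerCell_nonempty (h : IsPseudoclopenIso 𝒢 φ) (hFH : IsAdmissible 𝒢 F H)
    (hcell : (⋂₀ F \ ⋃₀ H).Nonempty) : (innerCell φ F H).Nonempty :=
  nonempty_iff_ne_empty.mpr
    (mt (h.2.2 F H hFH.1 hFH.2 hFH.3 hFH.4 hFH.5).2 hcell.ne_empty)

lemma innerCell_inter_nonempty (h : IsPseudoclopenIso 𝒢 φ) (hFH : IsAdmissible 𝒢 F H)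
    (ha : a ∈ 𝒢) (haH : a ∉ H) (hcell : ((⋂₀ F \ ⋃₀ H) ∩ a).Nonempty) :
    (innerCell φ F H ∩ (φ a).1).Nonempty := by
  rw [← innerCell_insert_left]
  refine h.innerCell_nonempty (hFH.insert_left ha haH) ?_
  rwa [sInter_insert, inter_comm a, inter_sdiff_right_comm]

lemma outerCell_inter_subset (h : IsPseudoclopenIso 𝒢 φ) (hFH : IsAdmissible 𝒢 F H)
    (ha : a ∈ 𝒢) (hb : b ∈ 𝒢) (haH : a ∉ H) (hbF : b ∉ F) (hab : a ≠ b)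
    (hcell : (⋂₀ F \ ⋃₀ H) ∩ a ⊆ b) : outerCell φ F H ∩ (φ a).2 ⊆ (φ b).1 := by
  rw [← outerCell_insert_left, ← sdiff_eq_empty, ← outerCell_insert_right]
  refine h.outerCell_eq_empty ((hFH.insert_left ha haH).insert_right hb
    (mt eq_or_mem_of_mem_insert (not_or.mpr ⟨hab.symm, hbF⟩))) ?_
  rwa [sInter_insert, sUnion_insert, union_comm b, ← Set.sdiff_sdiff, inter_comm a,
    inter_sdiff_right_comm, sdiff_eq_empty]

lemma outerCell_inter_inter_eq_empty (h : IsPseudoclopenIso 𝒢 φ) (hFH : IsAdmissible 𝒢 F H)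
    (ha : a ∈ 𝒢) (hb : b ∈ 𝒢) (haH : a ∉ H) (hbH : b ∉ H) (hcell : (⋂₀ F \ ⋃₀ H) ∩ a ∩ b = ∅) :
    outerCell φ F H ∩ (φ a).2 ∩ (φ b).2 = ∅ := by
  rw [← outerCell_insert_left, ← outerCell_insert_left]
  refine h.outerCell_eq_empty ((hFH.insert_left ha haH).insert_left hb hbH) ?_
  rwa [sInter_insert, sInter_insert, ← inter_assoc, inter_comm _ (⋂₀ F), inter_comm b,
    ← inter_assoc, inter_sdiff_right_comm, inter_sdiff_right_comm]

lemma compl (h : IsPseudoclopenIso 𝒢 φ) :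
    IsPseudoclopenIso (compl ⁻¹' 𝒢) fun a => ((φ aᶜ).2ᶜ, (φ aᶜ).1ᶜ) := by
  refine ⟨fun a ha b hb hab => ?_, fun a ha => ?_, fun F H hF hH hF𝒢 hH𝒢 hFH => ?_⟩
  · rw [Prod.mk.injEq, compl_inj_iff, compl_inj_iff] at hab
    exact compl_injective (h.1 ha hb (Prod.ext hab.2 hab.1))
  · obtain ⟨h_closed, h_open, h_subset⟩ := h.2.1 aᶜ ha
    exact ⟨h_open.isClosed_compl, h_closed.isOpen_compl, compl_subset_compl.mpr h_subset⟩
  · have hcell : ⋂₀ F \ ⋃₀ H = ⋂₀ (Compl.compl ⁻¹' H) \ ⋃₀ (Compl.compl ⁻¹' F) := by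
      simpa [sInter_eq_biInter, sUnion_eq_biUnion] using biInter_compl_sdiff_biUnion_compl id id F H
    beta_reduce
    rw [hcell, biInter_compl_sdiff_biUnion_compl (fun a => (φ a).1) (fun a => (φ a).2),
      biInter_compl_sdiff_biUnion_compl (fun a => (φ a).2) (fun a => (φ a).1)]
    exact h.2.2 _ _ (hH.preimage compl_injective.injOn) (hF.preimage compl_injective.injOn)
      (fun a ha => by simpa using hH𝒢 ha) (fun a ha => by simpa using hF𝒢 ha)
      (hFH.symm.preimage _)

end IsPseudoclopenIso

lemma SeparatesPoints'.compl {X : Type*} {𝒢 : Set (Set X)} (h : SeparatesPoints' 𝒢) :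
    SeparatesPoints' (compl ⁻¹' 𝒢) := by
  intro x y hxy
  obtain ⟨a, ha, h⟩ := h y x hxy.symm
  exact ⟨aᶜ, by rwa [mem_preimage, compl_compl], by simpa [and_comm] using h⟩

/-! ### Forests with infinite branching -/

namespace TreeSpace

variable {T : Type*} [PartialOrder T] [IsForestOrder T]

lemma eq_of_covBy_of_le {s t u u' : T} (hu : t ⋖ u) (hu' : t ⋖ u') (hus : u ≤ s) (hus' : u' ≤ s) :
    u = u' := by
  rcases IsForestOrder.le_or_ge_of_le hus hus' with h | h
  · exact (hu'.eq_or_eq hu.le h).resolve_left hu.ne'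
  · exact ((hu.eq_or_eq hu'.le h).resolve_left hu'.ne').symm

lemma exists_cone_subset {O : Set (TreeSpace T)} (hO : IsOpen O) {t : T} (ht : principal t ∈ O)
    {S : Set T} (hS : S.Infinite) (hcov : ∀ u ∈ S, t ⋖ u) : ∃ u ∈ S, cone u ⊆ O := by
  obtain ⟨I, hI⟩ := exists_finset_forall_mem_iff isClopen_cone
    (fun _ _ => exists_not_mem_cone_iff) hO ht
  have finite_bad : (⋃ s ∈ I, {u ∈ S | u ≤ s}).Finite :=
    I.finite_toSet.biUnion fun s _ => Set.Subsingleton.finite fun u hu u' hu' =>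
      eq_of_covBy_of_le (hcov u hu.1) (hcov u' hu'.1) hu.2 hu'.2
  obtain ⟨u, huS, hu⟩ := (hS.sdiff finite_bad).nonempty
  have not_le {s : T} (hs : s ∈ I) : ¬u ≤ s := fun hus => hu (mem_biUnion hs ⟨huS, hus⟩)
  refine ⟨u, huS, fun x hx => hI x fun s hs =>
    principal_mem_cone.trans ⟨fun hst => ?_, fun hxs => ?_⟩⟩
  · exact cone_antitone (hst.trans (hcov u huS).le) hx
  · have hsu : s ≤ u := (le_or_ge_of_mem_cone hxs hx).resolve_right (not_le hs)
    refine (IsForestOrder.le_or_ge_of_le hsu (hcov u huS).le).elim id fun hts => ?_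
    exact (((hcov u huS).eq_or_eq hts hsu).resolve_right fun h => not_le hs h.ge).le

lemma exists_nested_array {B : Set T} (hB : ∀ t ∈ B, {u ∈ B | t ⋖ u}.Infinite) {t₀ : T}
    (ht₀ : t₀ ∈ B) {Q : T → Set (TreeSpace T) → Prop}
    (hQ : ∀ s a, Q s a → IsOpen a ∧ principal s ∈ a)
    (hcof : ∀ t ∈ B, t₀ < t → ∃ s ∈ B, t ≤ s ∧ ∃ a, Q s a) :
    ∃ (s : ℕ → ℕ → T) (a : ℕ → ℕ → Set (TreeSpace T)), (∀ i j, t₀ < s i j ∧ Q (s i j) (a i j)) ∧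
      (∀ i j, s i j < s i (j + 1) ∧ cone (s i (j + 1)) ⊆ a i j) ∧
      ∀ i k, i ≠ k → ¬s i 0 ≤ s k 0 := by
  let Node := {p : T × Set (TreeSpace T) // p.1 ∈ B ∧ t₀ < p.1 ∧ Q p.1 p.2}
  have exists_node (t : T) (ht : t ∈ B) (htt : t₀ < t) : ∃ p : Node, t ≤ p.1.1 := by
    obtain ⟨s, hs, hts, a, ha⟩ := hcof t ht htt
    exact ⟨⟨(s, a), hs, htt.trans_le hts, ha⟩, hts⟩
  have exists_next (p : Node) : ∃ p' : Node, p.1.1 < p'.1.1 ∧ cone p'.1.1 ⊆ p.1.2 := by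
    obtain ⟨⟨s, a⟩, hs, hst, ha⟩ := p
    obtain ⟨u, ⟨huB, hsu⟩, hua⟩ := exists_cone_subset (hQ s a ha).1 (hQ s a ha).2 (hB s hs)
      fun u hu => hu.2
    obtain ⟨p', hp'⟩ := exists_node u huB (hst.trans hsu.lt)
    exact ⟨p', hsu.lt.trans_le hp', (cone_antitone hp').trans hua⟩
  choose next hnext using exists_next
  let u : ℕ ↪ {u ∈ B | t₀ ⋖ u} := (hB t₀ ht₀).natEmbedding
  choose start hstart using fun i => exists_node (u i) (u i).2.1 (u i).2.2.lt
  let node (i j : ℕ) : Node := next^[j] (start i)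
  refine ⟨fun i j => (node i j).1.1, fun i j => (node i j).1.2, fun i j => (node i j).2.2,
    fun i j => ?_, fun i k hik hle => hik (u.injective (Subtype.ext ?_))⟩
  · simp only [node, Function.iterate_succ_apply']
    exact hnext _
  · exact eq_of_covBy_of_le (u i).2.2 (u k).2.2 ((hstart i).trans hle) (hstart k)

/-- Inside `W`, the set `a` consists of chains through `t`, among them the least such chain. -/
structure IsolatesIn (W a : Set (TreeSpace T)) (t : T) : Prop where
  principal_mem : principal t ∈ a
  inter_subset : W ∩ a ⊆ cone t

namespace IsolatesIn

variable {W a a' : Set (TreeSpace T)} {t t' : T}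

lemma mono {W' : Set (TreeSpace T)} (h : IsolatesIn W a t) (hW : W' ⊆ W) : IsolatesIn W' a t :=
  ⟨h.1, (inter_subset_inter_left a hW).trans h.2⟩

lemma not_subset {t₀ : T} (h : IsolatesIn W a t) (ht₀ : t₀ < t) (hW : principal t₀ ∈ W) :
    ¬W ⊆ a :=
  fun hWa => ht₀.not_ge (principal_mem_cone.mp (h.2 ⟨hW, hWa hW⟩))

lemma ne (h : IsolatesIn W a t) (h' : IsolatesIn W a' t') (hW : principal t ∈ W) (ht : ¬t' ≤ t) :
    a ≠ a' := by
  rintro rfl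
  exact ht (principal_mem_cone.mp (h'.2 ⟨hW, h.1⟩))

lemma inter_inter_eq_empty (h : IsolatesIn W a t) (h' : IsolatesIn W a' t') (ht : ¬t ≤ t')
    (ht' : ¬t' ≤ t) : W ∩ a ∩ a' = ∅ :=
  eq_empty_of_forall_notMem fun _ hx => (le_or_ge_of_mem_cone (h.2 hx.1) (h'.2 ⟨hx.1.1, hx.2⟩)).elim
    ht ht'

end IsolatesIn

theorem false_of_forall_exists_isolatesIn {E : Type*} [AddCommGroup E] [Module ℝ E]
    [TopologicalSpace E] [IsTopologicalAddGroup E] [ContinuousSMul ℝ E] {K : Set E}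
    (hK_convex : Convex ℝ K) (hK : IsCompact K) {𝒢 F H : Set (Set (TreeSpace T))}
    {φ : Set (TreeSpace T) → Set K × Set K} (h𝒢 : ∀ a ∈ 𝒢, IsClopen a)
    (hφ : IsPseudoclopenIso 𝒢 φ) (hFH : IsAdmissible 𝒢 F H) {B : Set T}
    (hB : ∀ t ∈ B, {u ∈ B | t ⋖ u}.Infinite) {t₀ : T} (ht₀ : t₀ ∈ B)
    (hcell : cone t₀ ⊆ ⋂₀ F \ ⋃₀ H) {n : ℕ}
    (hcof : ∀ t ∈ B, t₀ < t → ∃ s ∈ B, t ≤ s ∧ ∃ a ∈ 𝒢, HasMargin n (φ a) ∧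
      IsolatesIn (⋂₀ F \ ⋃₀ H) a s) : False := by
  obtain ⟨s, a, hsa, hnext, hstart⟩ := exists_nested_array hB ht₀
    (Q := fun s a => a ∈ 𝒢 ∧ HasMargin n (φ a) ∧ IsolatesIn (⋂₀ F \ ⋃₀ H) a s)
    (fun s a h => ⟨(h𝒢 a h.1).isOpen, h.2.2.1⟩) hcof
  simp only [forall_and] at hsa hnext
  obtain ⟨hs, ha, h_margin, h_isolates⟩ := hsa
  obtain ⟨hs_lt, hs_cone⟩ := hnext
  have principal_mem_cell {t : T} (ht : t₀ ≤ t) : principal t ∈ ⋂₀ F \ ⋃₀ H :=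
    hcell (principal_mem_cone.mpr ht)
  have haF (i j : ℕ) : a i j ∉ F := fun haF =>
    (h_isolates i j).not_subset (hs i j) (principal_mem_cell le_rfl)
      (sdiff_subset.trans (sInter_subset_of_mem haF))
  have haH (i j : ℕ) : a i j ∉ H := fun haH =>
    (principal_mem_cell (hs i j).le).2 ⟨a i j, haH, (h_isolates i j).1⟩
  have nested (i j : ℕ) : (φ (a i (j + 1))).2 ∩ outerCell φ F H ⊆ (φ (a i j)).1 := by
    rw [inter_comm]
    refine hφ.outerCell_inter_subset hFH (ha i (j + 1)) (ha i j) (haH i (j + 1)) (haF i j) ?_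
      ((h_isolates i (j + 1)).2.trans (hs_cone i j))
    exact ((h_isolates i j).ne (h_isolates i (j + 1)) (principal_mem_cell (hs i j).le)
      (hs_lt i j).not_ge).symm
  have nonempty (i : ℕ) : (innerCell φ F H ∩ (φ (a i (n + 1))).1).Nonempty :=
    hφ.innerCell_inter_nonempty hFH (ha i _) (haH i _)
      ⟨_, principal_mem_cell (hs i _).le, (h_isolates i _).1⟩
  obtain ⟨i, i', hii', k, ⟨hkU, hk⟩, hk'⟩ := HasMargin.exists_ne_inter_nonempty hK_convex hK
    (hφ.isClosed_innerCell hFH) (hφ.isOpen_outerCell hFH) (hφ.innerCell_subset_outerCell hFH)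
    h_margin nested nonempty
  have disjoint : outerCell φ F H ∩ (φ (a i 0)).2 ∩ (φ (a i' 0)).2 = ∅ :=
    hφ.outerCell_inter_inter_eq_empty hFH (ha i 0) (ha i' 0) (haH i 0) (haH i' 0)
      ((h_isolates i 0).inter_inter_eq_empty (h_isolates i' 0) (hstart i i' hii')
        (hstart i' i hii'.symm))
  have fst_subset_snd (i : ℕ) : (φ (a i 0)).1 ⊆ (φ (a i 0)).2 := (hφ.2.1 _ (ha i 0)).2.2
  exact disjoint.subset ⟨⟨hkU, fst_subset_snd i hk⟩, fst_subset_snd i' hk'⟩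

end TreeSpace

/-! ### The tree of well-ordered sets of rationals -/

namespace WOQ

variable {s t u : WOQ} {q r : ℚ}

lemma le_iff : s ≤ t ↔ s.1 ⊆ t.1 ∧ ∀ a ∈ t.1, ∀ b ∈ s.1, a ≤ b → a ∈ s.1 :=
  and_congr_right fun _ => forall₂_congr fun _ _ =>
    ⟨fun h b hb hab => by_contra fun ha => (h ha b hb).not_ge hab,
      fun h ha b hb => lt_of_not_ge fun hab => ha (h b hb hab)⟩

lemma mem_of_le_of_mem (h : s ≤ t) (hq : q ∈ t.1) (hr : r ∈ s.1) (hqr : q ≤ r) : q ∈ s.1 :=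
  (le_iff.mp h).2 q hq r hr hqr

lemma le_of_subset (hs : s ≤ u) (ht : t ≤ u) (h : s.1 ⊆ t.1) : s ≤ t :=
  ⟨h, fun a ha => hs.2 a (ht.1 ha)⟩

lemma exists_mem_notMem_of_lt (h : s < t) : ∃ q ∈ t.1, q ∉ s.1 :=
  not_subset.mp fun hts => h.not_ge (le_of_subset le_rfl h.le hts)

instance : IsForestOrder WOQ where
  le_or_ge_of_le {s t u} hs ht := by
    by_cases h : s.1 ⊆ t.1
    · exact Or.inl (le_of_subset hs ht h)
    · obtain ⟨q, hqs, hqt⟩ := not_subset.mp h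
      refine Or.inr (le_of_subset ht hs fun r hr => ?_)
      exact mem_of_le_of_mem hs (ht.1 hr) hqs (ht.2 q (hs.1 hqs) hqt r hr).le

/-- The node obtained from `t` by adding the point `r`. -/
def extend (t : WOQ) (r : ℚ) : WOQ := ⟨insert r t.1, t.2.insert r⟩

lemma covBy_extend (hr : ∀ x ∈ t.1, x < r) : t ⋖ extend t r := by
  have le_extend : t ≤ extend t r := by
    refine ⟨subset_insert r t.1, fun a ha hat b hb => ?_⟩
    rw [(mem_insert_iff.mp ha).resolve_right hat]
    exact hr b hb
  have lt_extend : t < extend t r :=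
    lt_of_le_not_ge le_extend fun h => (hr r (h.1 (mem_insert r t.1))).false
  refine ⟨lt_extend, fun s hts hs => ?_⟩
  obtain ⟨q, hqs, hqt⟩ := exists_mem_notMem_of_lt hts
  obtain rfl : q = r := (hs.le.1 hqs).resolve_right hqt
  obtain ⟨q', hq', hq's⟩ := exists_mem_notMem_of_lt hs
  exact hq's (hq'.elim (fun h => h ▸ hqs) fun h => hts.le.1 h)

lemma extend_injOn : InjOn (extend t) t.1ᶜ := fun r hr _ _ h =>
  (mem_insert_iff.mp ((congrArg Subtype.val h).subset (mem_insert r t.1))).resolve_right hr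

/-- The supremum of `t` in `ℝ ∪ {-∞}` is less than `q`. -/
def SupLT (t : WOQ) (q : ℚ) : Prop := ∃ p < q, p ∈ upperBounds t.1

lemma infinite_covBy (ht : SupLT t q) : {u ∈ {u | SupLT u q} | t ⋖ u}.Infinite := by
  obtain ⟨p, hpq, hp⟩ := ht
  have Ioo_subset : Ioo p q ⊆ t.1ᶜ := fun r hr hrt => (hp hrt).not_gt hr.1
  refine infinite_of_injOn_mapsTo (extend_injOn.mono Ioo_subset) (fun r hr => ?_)
    (Ioo_infinite hpq)
  refine ⟨⟨r, hr.2, forall_mem_insert.mpr ⟨le_rfl, fun x hx => (hp hx).trans hr.1.le⟩⟩, ?_⟩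
  exact covBy_extend fun x hx => (hp hx).trans_lt hr.1

/-- The union of an increasing sequence of nodes. -/
def iUnion (t : ℕ → WOQ) (ht : Monotone t) : WOQ := ⟨⋃ n, (t n).1, by
  refine isWF_iff_no_descending_seq.mpr fun f hf hmem => ?_
  obtain ⟨m, hm⟩ := mem_iUnion.mp (hmem 0)
  refine isWF_iff_no_descending_seq.mp (t m).2 f hf fun k => ?_
  obtain ⟨l, hl⟩ := mem_iUnion.mp (hmem k)
  rcases le_total l m with h | h
  · exact (ht h).1 hl
  · exact mem_of_le_of_mem (ht h) hl hm (hf.antitone k.zero_le)⟩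

lemma le_iUnion {t : ℕ → WOQ} (ht : Monotone t) (n : ℕ) : t n ≤ iUnion t ht := by
  refine ⟨subset_iUnion (fun n => (t n).1) n, fun a ha han => ?_⟩
  obtain ⟨m, hm⟩ := mem_iUnion.mp ha
  rcases le_total m n with h | h
  · exact absurd ((ht h).1 hm) han
  · exact (ht h).2 a hm han

lemma supLT_iUnion {t : ℕ → WOQ} (ht : Monotone t) {q : ℕ → ℚ} (hq : StrictAnti q)
    (htq : ∀ n, SupLT (t n) (q n)) (n : ℕ) : SupLT (iUnion t ht) (q n) := by
  refine ⟨q (n + 1), hq n.lt_succ_self, fun x hx => ?_⟩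
  obtain ⟨m, hm⟩ := mem_iUnion.mp hx
  obtain ⟨p, hp_lt, hp⟩ := htq (max m (n + 1))
  exact (hp ((ht (le_max_left m (n + 1))).1 hm)).trans
    (hp_lt.le.trans (hq.antitone (le_max_right m (n + 1))))

/- The ordering of the pairs `(t, q)` with `SupLT t q` by extending `t` and lowering `q` is
`σ`-closed, by `supLT_iUnion`. -/
lemma exists_forall_exists_ge_mem {ι : Type*} [Countable ι] {C : ι → Set WOQ} {t₀ : WOQ} {q₀ : ℚ}
    (h₀ : SupLT t₀ q₀) (hC : ∀ t ≥ t₀, ∃ i, t ∈ C i) :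
    ∃ i, ∃ t₁ ≥ t₀, ∃ q₁, SupLT t₁ q₁ ∧
      ∀ t ≥ t₁, SupLT t q₁ → ∃ s ≥ t, SupLT s q₁ ∧ s ∈ C i := by
  by_contra! hcon
  obtain ⟨i₀, -⟩ := hC t₀ le_rfl
  have : Nonempty ι := ⟨i₀⟩
  obtain ⟨e, he⟩ := exists_surjective_nat ι
  let Node := {p : WOQ × ℚ // t₀ ≤ p.1 ∧ SupLT p.1 p.2}
  have exists_next (n : ℕ) (p : Node) : ∃ p' : Node, p.1.1 ≤ p'.1.1 ∧ p'.1.2 < p.1.2 ∧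
      ∀ s ≥ p'.1.1, SupLT s p.1.2 → s ∉ C (e n) := by
    obtain ⟨⟨t, q⟩, ht, htq⟩ := p
    obtain ⟨t', htt', ⟨p, hpq, hp⟩, ht'⟩ := hcon (e n) t ht q htq
    obtain ⟨q', hpq', hq'q⟩ := exists_between hpq
    exact ⟨⟨(t', q'), le_trans ht htt', p, hpq', hp⟩, htt', hq'q, ht'⟩
  choose next hnext_le hnext_lt hnext using exists_next
  let node (n : ℕ) : Node := Nat.rec ⟨(t₀, q₀), le_rfl, h₀⟩ next n
  have monotone_fst : Monotone fun n => (node n).1.1 := monotone_nat_of_le_succ fun n =>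
    hnext_le n (node n)
  have strictAnti_snd : StrictAnti fun n => (node n).1.2 := strictAnti_nat_of_succ_lt fun n =>
    hnext_lt n (node n)
  obtain ⟨i, hi⟩ := hC (iUnion _ monotone_fst) (le_iUnion monotone_fst 0)
  obtain ⟨n, rfl⟩ := he i
  exact hnext n (node n) _ (le_iUnion monotone_fst (n + 1))
    (supLT_iUnion monotone_fst strictAnti_snd (fun n => (node n).2.2) n) hi

/-- The initial segment of `t` of the elements `≤ q`. -/
def restrict (t : WOQ) (q : ℚ) : WOQ := ⟨t.1 ∩ Iic q, t.2.mono inter_subset_left⟩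

lemma restrict_le (t : WOQ) (q : ℚ) : restrict t q ≤ t :=
  le_iff.mpr ⟨inter_subset_left, fun _ ha _ hb hab => ⟨ha, hab.trans hb.2⟩⟩

lemma restrict_mono (t : WOQ) : Monotone (restrict t) := fun _ _ h =>
  le_of_subset (restrict_le _ _) (restrict_le _ _)
    (inter_subset_inter_right _ (Iic_subset_Iic.mpr h))

lemma restrict_eq_of_le (h : t ≤ s) (hq : q ∈ t.1) : restrict s q = restrict t q :=
  Subtype.ext (subset_antisymm (fun _ hx => ⟨mem_of_le_of_mem h hx.1 hq hx.2, hx.2⟩)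
    (inter_subset_inter_left _ h.1))

lemma exists_le_restrict_of_lt (h : s < t) : ∃ q ∈ t.1, s ≤ restrict t q := by
  obtain ⟨q, hqt, hqs⟩ := exists_mem_notMem_of_lt h
  exact ⟨q, hqt, le_of_subset h.le (restrict_le t q) fun r hr =>
    ⟨h.le.1 hr, (h.le.2 q hqt hqs r hr).le⟩⟩

lemma le_of_forall_restrict_le (h : ∀ q ∈ t.1, restrict t q ≤ s) : t ≤ s :=
  le_iff.mpr ⟨fun q hq => (h q hq).1 ⟨hq, self_mem_Iic⟩, fun _ ha b hb hab =>
    (mem_of_le_of_mem (h b hb) ha ⟨hb, self_mem_Iic⟩ hab).1⟩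

end WOQ

/-! ### Isolated nodes of the tree space of `WOQ` -/

namespace WOQ

open TreeSpace

variable {t : WOQ}

lemma exists_forall_mem_cone_iff (ht : t.1.Nonempty) (s : WOQ) :
    ∃ q ∈ t.1, ∀ x ∈ cone (restrict t q) \ cone t, strictPrincipal t ∈ cone s ↔ x ∈ cone s := by
  by_cases hst : s < t
  · obtain ⟨q, hq, hsq⟩ := exists_le_restrict_of_lt hst
    exact ⟨q, hq, fun x hx => iff_of_true (strictPrincipal_mem_cone.mpr hst)
      (cone_antitone hsq hx.1)⟩
  suffices h : ∃ q ∈ t.1, ∀ x ∈ cone (restrict t q) \ cone t, x ∉ cone s by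
    obtain ⟨q, hq, h⟩ := h
    exact ⟨q, hq, fun x hx => iff_of_false (mt strictPrincipal_mem_cone.mp hst) (h x hx)⟩
  by_cases hts : t ≤ s
  · obtain ⟨q, hq⟩ := ht
    exact ⟨q, hq, fun x hx hxs => hx.2 (cone_antitone hts hxs)⟩
  · obtain ⟨q, hq, hqs⟩ : ∃ q ∈ t.1, ¬restrict t q ≤ s := by
      by_contra! h
      exact hts (le_of_forall_restrict_le h)
    refine ⟨q, hq, fun x hx hxs => hst (lt_of_le_not_ge ?_ hts)⟩
    exact ((le_or_ge_of_mem_cone hxs hx.1).resolve_right hqs).trans (restrict_le t q)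

lemma exists_cone_restrict_sdiff_subset (ht : t.1.Nonempty) {O : Set (TreeSpace WOQ)}
    (hO : IsOpen O) (htO : strictPrincipal t ∈ O) :
    ∃ q ∈ t.1, cone (restrict t q) \ cone t ⊆ O := by
  obtain ⟨I, hI⟩ := exists_finset_forall_mem_iff isClopen_cone
    (fun _ _ => exists_not_mem_cone_iff) hO htO
  choose q hqt hq using exists_forall_mem_cone_iff ht
  have : Nonempty t.1 := ht.to_subtype
  obtain ⟨⟨m, hmt⟩, hm⟩ := (I.image fun s => (⟨q s, hqt s⟩ : t.1)).exists_le
  refine ⟨m, hmt, fun x hx => hI x fun s hs => hq s x ⟨?_, hx.2⟩⟩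
  exact cone_antitone (restrict_mono t (hm _ (Finset.mem_image_of_mem _ hs))) hx.1

variable {E : Type*} [AddCommGroup E] [Module ℝ E] {K : Set E} {𝒢 : Set (Set (TreeSpace WOQ))}
  {φ : Set (TreeSpace WOQ) → Set K × Set K}

/-- The nodes `t ∋ q` isolated inside the cone of `t ∩ (-∞, q]` by a member of the family `𝒢` with
image of margin `n`. -/
def isolatedNodes (𝒢 : Set (Set (TreeSpace WOQ))) (φ : Set (TreeSpace WOQ) → Set K × Set K)
    (n : ℕ) (q : ℚ) : Set WOQ :=
  {t | q ∈ t.1 ∧ ∃ a ∈ 𝒢, HasMargin n (φ a) ∧ IsolatesIn (cone (restrict t q)) a t}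

variable [TopologicalSpace E] [IsTopologicalAddGroup E] [ContinuousSMul ℝ E]

lemma exists_mem_isolatedNodes (hK : IsCompact K) (h𝒢 : ∀ a ∈ 𝒢, IsClopen a)
    (hφ : IsPseudoclopenIso 𝒢 φ) (ht : t.1.Nonempty) {a : Set (TreeSpace WOQ)} (ha : a ∈ 𝒢)
    (hta : principal t ∈ a) (hta' : strictPrincipal t ∉ a) :
    ∃ n q, t ∈ isolatedNodes 𝒢 φ n q := by
  obtain ⟨h_closed, h_open, h_subset⟩ := hφ.2.1 a ha
  obtain ⟨n, hn⟩ := exists_hasMargin hK h_closed h_open h_subset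
  obtain ⟨q, hqt, hq⟩ := exists_cone_restrict_sdiff_subset ht (h𝒢 a ha).compl.isOpen hta'
  exact ⟨n, q, hqt, a, ha, hn, hta, fun x hx => by_contra fun hxt => hq ⟨hx.1, hxt⟩ hx.2⟩

lemma not_cofinal_isolatedNodes (hK_convex : Convex ℝ K) (hK : IsCompact K)
    (h𝒢 : ∀ a ∈ 𝒢, IsClopen a) (hsep : SeparatesPoints' 𝒢) (hφ : IsPseudoclopenIso 𝒢 φ) (n : ℕ)
    (q : ℚ) {t₁ : WOQ} {q₁ : ℚ} (ht₁ : SupLT t₁ q₁) :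
    ¬∀ t ≥ t₁, SupLT t q₁ → ∃ s ≥ t, SupLT s q₁ ∧ s ∈ isolatedNodes 𝒢 φ n q := by
  intro hcof
  obtain ⟨t₂, ht₂₁, ht₂, hqt₂, -⟩ := hcof t₁ le_rfl ht₁
  obtain ⟨F, H, hFH, ht₂_mem, hcell⟩ := hsep.exists_cell_subset h𝒢
    (isClopen_cone (restrict t₂ q)).isOpen (principal_mem_cone.mpr (restrict_le t₂ q))
  obtain ⟨t₀, ⟨ht₀, ht₂₀⟩, ht₀_cell⟩ := exists_cone_subset (hFH.isOpen_cell h𝒢) ht₂_mem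
    (infinite_covBy ht₂) fun u hu => hu.2
  refine false_of_forall_exists_isolatesIn hK_convex hK h𝒢 hφ hFH (fun t => infinite_covBy)
    ht₀ ht₀_cell (n := n) fun t ht htt₀ => ?_
  have ht₂t : t₂ ≤ t := ht₂₀.le.trans htt₀.le
  obtain ⟨s, hts, hs, -, a, ha, hn, hsa⟩ := hcof t (ht₂₁.le.trans ht₂t) ht
  refine ⟨s, hs, hts, a, ha, hn, hsa.mono ?_⟩
  rwa [restrict_eq_of_le (ht₂t.trans hts) hqt₂]

lemma exists_mem_isolatedNodes_or (hK : IsCompact K) (h𝒢 : ∀ a ∈ 𝒢, IsClopen a)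
    (hsep : SeparatesPoints' 𝒢) (hφ : IsPseudoclopenIso 𝒢 φ) (ht : t.1.Nonempty) :
    (∃ n q, t ∈ isolatedNodes 𝒢 φ n q) ∨
      ∃ n q, t ∈ isolatedNodes (compl ⁻¹' 𝒢) (fun a => ((φ aᶜ).2ᶜ, (φ aᶜ).1ᶜ)) n q := by
  obtain ⟨a, ha, ⟨hta, hta'⟩ | ⟨hta', hta⟩⟩ := hsep _ _ (principal_ne_strictPrincipal t)
  · exact Or.inl (exists_mem_isolatedNodes hK h𝒢 hφ ht ha hta hta')
  · exact Or.inr (exists_mem_isolatedNodes hK (fun a ha => isClopen_compl_iff.mp (h𝒢 aᶜ ha))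
      hφ.compl ht (a := aᶜ) (by rwa [mem_preimage, compl_compl]) hta (not_not.mpr hta'))

theorem not_isBooleanImage_of_convex (hK_convex : Convex ℝ K) (hK : IsCompact K) :
    ¬IsBooleanImage (TreeSpace WOQ) K := by
  rintro ⟨𝒢, φ, h𝒢, hsep, hφ⟩
  have h𝒢_compl : ∀ a ∈ compl ⁻¹' 𝒢, IsClopen a := fun a ha => isClopen_compl_iff.mp (h𝒢 aᶜ ha)
  let C : (ℕ × ℚ) ⊕ (ℕ × ℚ) → Set WOQ :=
    Sum.elim (fun p => isolatedNodes 𝒢 φ p.1 p.2) fun p =>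
      isolatedNodes (compl ⁻¹' 𝒢) (fun a => ((φ aᶜ).2ᶜ, (φ aᶜ).1ᶜ)) p.1 p.2
  let t₀ : WOQ := ⟨{0}, isWF_singleton⟩
  have ht₀ : SupLT t₀ 1 := ⟨0, one_pos, by simp [t₀]⟩
  have exists_mem_C : ∀ t ≥ t₀, ∃ i, t ∈ C i := fun t ht => by
    simpa [C] using exists_mem_isolatedNodes_or hK h𝒢 hsep hφ ⟨0, ht.1 rfl⟩
  obtain ⟨⟨n, q⟩ | ⟨n, q⟩, t₁, -, q₁, ht₁, hcof⟩ := exists_forall_exists_ge_mem ht₀ exists_mem_C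
  · exact not_cofinal_isolatedNodes hK_convex hK h𝒢 hsep hφ n q ht₁ hcof
  · exact not_cofinal_isolatedNodes hK_convex hK h𝒢_compl hsep.compl hφ.compl n q ht₁ hcof

end WOQ

/-! ### A path-connected compact space with `TreeSpace WOQ` as a Boolean image -/

/-- The measure of `s` in which each point `a` of the encodable type has mass `2 ^ (-encode a)`. -/
noncomputable def geomWeight {α : Type*} [Encodable α] (s : Set α) : ℝ :=
  ∑' a : s, (1 / 2) ^ Encodable.encode (a : α)

section geomWeight

variable {α : Type*} [Encodable α] {s t : Set α}

lemma geomWeight_mem_Icc (s : Set α) : geomWeight s ∈ Icc 0 (geomWeight (univ : Set α)) := by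
  refine ⟨tsum_nonneg fun a => by positivity, ?_⟩
  rw [geomWeight, geomWeight, tsum_univ fun a : α => (1 / 2 : ℝ) ^ Encodable.encode a]
  exact summable_geometric_two_encode.tsum_subtype_le _ s fun a => by positivity

lemma geomWeight_add_le {a : α} (hst : s ⊆ t) (hat : a ∈ t) (has : a ∉ s) :
    geomWeight s + (1 / 2) ^ Encodable.encode a ≤ geomWeight t := by
  have summable (u : Set α) : Summable fun a : u => (1 / 2 : ℝ) ^ Encodable.encode (a : α) :=
    summable_geometric_two_encode.subtype u
  calc geomWeight s + (1 / 2) ^ Encodable.encode a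
      = ∑' b : (s ∪ {a} : Set α), (1 / 2 : ℝ) ^ Encodable.encode (b : α) := by
        rw [(summable s).tsum_union_disjoint (f := fun b : α => (1 / 2 : ℝ) ^ Encodable.encode b)
          (disjoint_singleton_right.mpr has) (summable {a}), tsum_singleton a
          fun b : α => (1 / 2 : ℝ) ^ Encodable.encode b, geomWeight]
    _ ≤ geomWeight t :=
        Summable.tsum_le_tsum_of_inj _
          (inclusion_injective (union_subset hst (singleton_subset_iff.mpr hat)))
          (fun _ _ => by positivity) (fun _ => le_rfl) (summable _) (summable t)

end geomWeight

namespace WOQ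

lemma exists_mem_notMem_of_isChain {S : Set WOQ} (hS : IsChain (· ≤ ·) S) {s s' : WOQ}
    (hs' : s' ∈ S) (hss' : s < s') : ∃ q ∉ s.1, ∀ t ∈ S, s < t → q ∈ t.1 := by
  have hdiff : (s'.1 \ s.1).Nonempty := exists_mem_notMem_of_lt hss'
  have hwf : (s'.1 \ s.1).IsWF := s'.2.mono sdiff_subset
  refine ⟨hwf.min hdiff, (hwf.min_mem hdiff).2, fun t ht hst => ?_⟩
  rcases hS.total hs' ht with h | h
  · exact h.1 (hwf.min_mem hdiff).1
  · obtain ⟨p, hpt, hps⟩ := exists_mem_notMem_of_lt hst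
    exact mem_of_le_of_mem h (hwf.min_mem hdiff).1 hpt (hwf.min_le hdiff ⟨h.1 hpt, hps⟩)

lemma exists_geomWeight_add_le {S : Set WOQ} (hS : IsChain (· ≤ ·) S) (s : WOQ) :
    ∃ δ > 0, ∀ t ∈ S, s < t → geomWeight s.1 + δ ≤ geomWeight t.1 := by
  by_cases h : ∃ s' ∈ S, s < s'
  · obtain ⟨s', hs', hss'⟩ := h
    obtain ⟨q, hqs, hq⟩ := exists_mem_notMem_of_isChain hS hs' hss'
    exact ⟨(1 / 2) ^ Encodable.encode q, by positivity,
      fun t ht hst => geomWeight_add_le hst.le.1 (hq t ht hst) hqs⟩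
  · push Not at h
    exact ⟨1, one_pos, fun t ht hst => absurd hst (h t ht)⟩

instance : PathConnectedSpace (ConnectedTreeSpace WOQ) :=
  ConnectedTreeSpace.pathConnectedSpace (fun t => geomWeight t.1) (fun t => geomWeight_mem_Icc t.1)
    fun _ hS s _ => exists_geomWeight_add_le hS s

end WOQ

theorem tree_space_WOQ_not_boolean_image_of_convex_general :
    (∃ (K : Type) (_ : TopologicalSpace K) (_ : CompactSpace K) (_ : T2Space K)
       (_ : PathConnectedSpace K), IsBooleanImage ↥(TreeSpace WOQ) K) ∧
    (∀ (E : Type*) [AddCommGroup E] [Module ℝ E] [TopologicalSpace E] [IsTopologicalAddGroup E]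
       [ContinuousSMul ℝ E] (K : Set E),
      Convex ℝ K → IsCompact K → ¬ IsBooleanImage ↥(TreeSpace WOQ) ↥K) :=
  ⟨⟨ConnectedTreeSpace WOQ, inferInstance, inferInstance, inferInstance, inferInstance,
    ConnectedTreeSpace.isBooleanImage⟩, fun _ _ _ _ _ _ _ => WOQ.not_isBooleanImage_of_convex⟩

/-- The tree space of the tree of well-ordered subsets of `ℚ` is a
Boolean image of a path-connected compact Hausdorff space, but is not a Boolean
image of any convex compact subset of a Tikhonov cube `[0,1]^Γ`. -/
theorem tree_space_WOQ_not_boolean_image_of_convex :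
    (∃ (K : Type) (_ : TopologicalSpace K) (_ : CompactSpace K) (_ : T2Space K)
       (_ : PathConnectedSpace K), IsBooleanImage ↥(TreeSpace WOQ) K) ∧
    (∀ (Γ : Type*) (K : Set (Γ → ℝ)), (∀ x ∈ K, ∀ γ, x γ ∈ Set.Icc (0:ℝ) 1) →
      Convex ℝ K → IsCompact K → ¬ IsBooleanImage ↥(TreeSpace WOQ) ↥K) :=
  tree_space_WOQ_not_boolean_image_of_convex_general.imp_right fun h Γ K _ => h (Γ → ℝ) K
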